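/- Let θ ∈ (0, 1), let X₀ ∈ ℝ^{n×p} have i.i.d. BG(θ) entries, and fix any w ∈ Γ with w ≠ 0. Then for every t > 0, P[ | wᵀ∇g(w; X₀)/‖w‖ − E[wᵀ∇g(w; X₀)/‖w‖] | ≥ t ] ≤ 2 exp( −p t² / (8n + 4√n · t) ). -/

import Mathlib

/-!
The radial derivative of `g` at `w` is the average over the columns `x` of
`Z(x) = tanh (qᵀx / μ) * (∂q)ᵀx`, where `∂q` is the derivative of `q` in the direction `w / ‖w‖`
and `‖∂q‖² = (1 - ‖w‖²)⁻¹ ≤ 4n` on `Γ`. Since `|tanh| ≤ 1`, each `Z(x)` is dominated by `(∂q)ᵀx`,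
which is sub-Gaussian because the Bernoulli–Gaussian law is.

Centring a variable `Z` with `|Z| ≤ |Y|` need not preserve the sub-Gaussian constant of `Y`, but
it costs only a sub-gamma correction: pointwise `exp (aZ) ≤ aZ + cosh (aY) + O(|a|³)`, where the
first term has the mean that centring removes, the second has the Gaussian expectation bound, and
the remainder is absorbed into the scale parameter `‖∂q‖`. Bernstein's inequality for averages of
independent sub-gamma variables then gives the tail.
-/

open MeasureTheory ProbabilityTheory Real Matrix
open scoped RealInnerProductSpace ENNReal NNReal

noncomputable section

/-- The Bernoulli–Gaussian law `BG(θ)`: with probability `θ` a standard Gaussian,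
with probability `1-θ` a point mass at `0`. -/
def bg (θ : ℝ) : Measure ℝ :=
  θ.toNNReal • gaussianReal 0 1 + (1 - θ).toNNReal • Measure.dirac 0

instance bg.instIsFiniteMeasure (θ : ℝ) : IsFiniteMeasure (bg θ) := by
  unfold bg; infer_instance

/-- Law of an `n × p` matrix with i.i.d. `BG(θ)` entries. -/
def bgMatrix (θ : ℝ) (n p : ℕ) : Measure (Fin n → Fin p → ℝ) :=
  Measure.pi fun _ => Measure.pi fun _ => bg θ

/-- Law of a vector in `ℝ^n` with i.i.d. `BG(θ)` entries. -/
def bgVec (θ : ℝ) (n : ℕ) : Measure (Fin n → ℝ) :=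
  Measure.pi fun _ => bg θ

/-- The smooth sparsity surrogate `h_μ(z) = μ log cosh (z/μ)`. -/
def hmu (μ z : ℝ) : ℝ := μ * Real.log (Real.cosh (z / μ))

/-- Reparametrization `q(w) = (w, √(1-‖w‖²))` with `w` in the unit ball of `ℝ^{n-1}`. -/
def qmap (n : ℕ) (w : EuclideanSpace ℝ (Fin (n - 1))) : Fin n → ℝ :=
  fun i => if h : (i : ℕ) < n - 1 then w ⟨i, h⟩ else Real.sqrt (1 - ‖w‖ ^ 2)

/-- `f(q; Y) = (1/p) ∑ₖ h_μ(qᵀ yₖ)`. -/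
def ffun (n p : ℕ) (μ : ℝ) (Y : Matrix (Fin n) (Fin p) ℝ)
    (q : EuclideanSpace ℝ (Fin n)) : ℝ :=
  (p : ℝ)⁻¹ * ∑ k : Fin p, hmu μ (∑ i : Fin n, q i * Y i k)

/-- `g(w; Y) = f(q(w); Y)`. -/
def gfun (n p : ℕ) (μ : ℝ) (Y : Matrix (Fin n) (Fin p) ℝ)
    (w : EuclideanSpace ℝ (Fin (n - 1))) : ℝ :=
  (p : ℝ)⁻¹ * ∑ k : Fin p, hmu μ (∑ i : Fin n, qmap n w i * Y i k)

/-- Gradient `∇g(w; Y)` in `w`. -/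
def gradg (n p : ℕ) (μ : ℝ) (Y : Matrix (Fin n) (Fin p) ℝ)
    (w : EuclideanSpace ℝ (Fin (n - 1))) : EuclideanSpace ℝ (Fin (n - 1)) :=
  gradient (gfun n p μ Y) w

/-- Hessian `∇²g(w; Y)` in `w`, as a continuous linear map. -/
def hessg (n p : ℕ) (μ : ℝ) (Y : Matrix (Fin n) (Fin p) ℝ)
    (w : EuclideanSpace ℝ (Fin (n - 1))) :
    EuclideanSpace ℝ (Fin (n - 1)) →L[ℝ] EuclideanSpace ℝ (Fin (n - 1)) :=
  fderiv ℝ (gradg n p μ Y) w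

/-- The set `Γ = {w : ‖w‖ < √((4n-1)/(4n))}`. -/
def GammaSet (n : ℕ) : Set (EuclideanSpace ℝ (Fin (n - 1))) :=
  {w | ‖w‖ < Real.sqrt ((4 * (n : ℝ) - 1) / (4 * n))}

/-- Spectral (`ℓ²→ℓ²` operator) norm of а matrix. -/
def specNorm {m k : ℕ} (M : Matrix (Fin m) (Fin k) ℝ) : ℝ :=
  ‖LinearMap.toContinuousLinearMap (Matrix.toEuclideanLin M)‖

/-- Largest magnitude of an entry of a matrix. -/
def Minf {m k : ℕ} (M : Matrix (Fin m) (Fin k) ℝ) : ℝ := ⨆ i, ⨆ j, |M i j|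

/-- Condition number: ratio of largest to smallest singular value. -/
def kappa {n : ℕ} (s : Fin n → ℝ) : ℝ := (⨆ i, s i) / (⨅ i, s i)

/-- Signed standard basis vectors `{± e_i}` of `ℝ^n`. -/
def SignedBasis (n : ℕ) : Set (EuclideanSpace ℝ (Fin n)) :=
  {b | ∃ i : Fin n, b = EuclideanSpace.single i (1 : ℝ) ∨ b = -EuclideanSpace.single i (1 : ℝ)}

/-- Set of local minimizers of `f(·; Y)` over the unit sphere `S^{n-1}`. -/
def LocalMins (n p : ℕ) (μ : ℝ) (Y : Matrix (Fin n) (Fin p) ℝ) :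
    Set (EuclideanSpace ℝ (Fin n)) :=
  {q | q ∈ Metric.sphere (0 : EuclideanSpace ℝ (Fin n)) 1 ∧
       IsLocalMinOn (ffun n p μ Y) (Metric.sphere (0 : EuclideanSpace ℝ (Fin n)) 1) q}

/-- Expected objective `E_x[h_μ(q(w)ᵀ x)]` for `x` with i.i.d. `BG(θ)` entries. -/
def Gexp (n : ℕ) (θ μ : ℝ) (w : EuclideanSpace ℝ (Fin (n - 1))) : ℝ :=
  ∫ x, hmu μ (∑ i : Fin n, qmap n w i * x i) ∂(bgVec θ n)

section HyperbolicInequalities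

lemma sinh_mul_sub_mul_le {a y : ℝ} (ha0 : 0 ≤ a) (ha1 : a ≤ 1) (hy : 0 ≤ y) :
    sinh (a * y) - a * y ≤ a ^ 3 * (sinh y - y) := by
  have hay := (hasSum_nat_add_iff' 1).2 (hasSum_sinh (a * y))
  have hy' := ((hasSum_nat_add_iff' 1).2 (hasSum_sinh y)).mul_left (a ^ 3)
  simp only [Finset.sum_range_one, mul_zero, zero_add, pow_one, Nat.factorial_one, Nat.cast_one,
    div_one] at hay hy'
  refine hasSum_le (fun k => ?_) hay hy'
  rw [mul_pow, mul_div_assoc]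
  exact mul_le_mul_of_nonneg_right (pow_le_pow_of_le_one ha0 ha1 (by lia)) (by positivity)

lemma five_mul_cosh_sub_one_le {y : ℝ} (hy : 0 ≤ y) :
    5 * (cosh y - 1) ≤ sinh y * (cosh y + 1) := by
  have hC : 1 ≤ cosh y := one_le_cosh y
  have tangent_line : 27 * (cosh y - 1) ≤ (cosh y + 1) ^ 3 := by
    nlinarith [mul_nonneg (sq_nonneg (cosh y - 2)) (by linarith : 0 ≤ cosh y + 7)]
  refine abs_le_of_sq_le_sq' ?_ (mul_nonneg (sinh_nonneg_iff.2 hy) (by linarith)) |>.2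
  calc (5 * (cosh y - 1)) ^ 2 = (cosh y - 1) * (25 * (cosh y - 1)) := by ring
    _ ≤ (cosh y - 1) * (cosh y + 1) ^ 3 := by
        gcongr; linarith
    _ = (sinh y * (cosh y + 1)) ^ 2 := by rw [mul_pow, sinh_sq]; ring

-- The right-hand side is chosen for its explicit Gaussian bound: by
-- `exp_two_add_four_mul_exp_half_le` its expectation at a 1-sub-Gaussian variable is at most 1/2.
lemma sinh_sub_self_le {y : ℝ} (hy : 0 ≤ y) :
    sinh y - y ≤ (cosh (2 * y) + 4 * cosh y - 5) / 20 := by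
  let gap : ℝ → ℝ := fun x => sinh x ^ 2 / 10 + (cosh x - 1) / 5 - (sinh x - x)
  have hderiv (x : ℝ) : HasDerivAt gap (sinh x * (cosh x + 1) / 5 - (cosh x - 1)) x := by
    refine ((((hasDerivAt_sinh x).pow 2).div_const 10).add
      (((hasDerivAt_cosh x).sub_const 1).div_const 5)).sub
      ((hasDerivAt_sinh x).sub (hasDerivAt_id x)) |>.congr_deriv ?_
    ring
  have hmono : MonotoneOn gap (Set.Ici 0) := by
    refine monotoneOn_of_hasDerivWithinAt_nonneg (convex_Ici 0)
      (fun x _ => (hderiv x).continuousAt.continuousWithinAt)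
      (fun x _ => (hderiv x).hasDerivWithinAt) fun x hx => ?_
    linarith [five_mul_cosh_sub_one_le (interior_subset hx : (0 : ℝ) ≤ x)]
  have hgap : gap 0 ≤ gap y := hmono Set.self_mem_Ici hy hy
  simp only [gap, sinh_zero, cosh_zero] at hgap
  rw [cosh_two_mul, cosh_sq]
  linarith

lemma exp_mul_le_of_abs_le {a y z : ℝ} (ha : |a| ≤ 1) (hzy : |z| ≤ |y|) :
    exp (a * z) ≤ a * z + cosh (a * y) + |a| ^ 3 * ((cosh (2 * y) + 4 * cosh y - 5) / 20) := by
  have habs : |a * z| ≤ |a| * |y| := by rw [abs_mul]; gcongr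
  have heven : cosh (a * z) ≤ cosh (a * y) := cosh_le_cosh.2 (by rwa [abs_mul a y])
  have hodd : sinh (a * z) - a * z ≤ |a| ^ 3 * ((cosh (2 * y) + 4 * cosh y - 5) / 20) :=
    calc sinh (a * z) - a * z ≤ sinh (|a| * |y|) - |a| * |y| :=
          sinh_sub_id_strictMono.monotone ((le_abs_self _).trans habs)
      _ ≤ |a| ^ 3 * (sinh |y| - |y|) := sinh_mul_sub_mul_le (abs_nonneg a) ha (abs_nonneg y)
      _ ≤ |a| ^ 3 * ((cosh (2 * |y|) + 4 * cosh |y| - 5) / 20) := by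
          gcongr; exact sinh_sub_self_le (abs_nonneg y)
      _ = _ := by rw [← cosh_abs (2 * y), abs_mul 2 y, abs_two, cosh_abs y]
  linarith [cosh_add_sinh (a * z)]

lemma exp_two_add_four_mul_exp_half_le : exp 2 + 4 * exp (1 / 2) ≤ 15 := by
  have htwo : exp 2 = exp 1 ^ 2 := by rw [← exp_nat_mul]; norm_num
  have hhalf : exp (1 / 2) ^ 2 = exp 1 := by rw [← exp_nat_mul]; norm_num
  have htwo_le : exp 2 ≤ 8 := by nlinarith [exp_one_lt_d9, exp_pos 1]
  have hhalf_le : exp (1 / 2) ≤ 7 / 4 := by nlinarith [exp_one_lt_d9, exp_pos (1 / 2)]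
  linarith

lemma exp_half_sq_add_half_cube_le {a : ℝ} (ha0 : 0 ≤ a) (ha1 : a < 1) :
    exp (a ^ 2 / 2) + a ^ 3 / 2 ≤ 1 + a ^ 2 / (2 * (1 - a)) := by
  have hexp : exp (a ^ 2 / 2) - 1 - a ^ 2 / 2 ≤ (a ^ 2 / 2) ^ 2 :=
    (le_abs_self _).trans (abs_exp_sub_one_sub_id_le (by
      rw [abs_of_nonneg (by positivity)]; nlinarith))
  have hgeom : a ^ 2 / 2 * (1 + a + a ^ 2) ≤ a ^ 2 / (2 * (1 - a)) := by
    rw [le_div_iff₀ (by linarith)]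
    nlinarith [pow_nonneg ha0 5]
  nlinarith [pow_nonneg ha0 4]

end HyperbolicInequalities

/-- Sub-gamma random variables: the moment generating function satisfies Bernstein's bound with
variance factor `v` and scale `c`. For `c = 0` this is the sub-Gaussian condition. -/
structure HasSubgammaMGF {Ω : Type*} [MeasurableSpace Ω] (X : Ω → ℝ) (v c : ℝ) (P : Measure Ω) :
    Prop where
  integrable_exp_mul : ∀ l, |l| * c < 1 → Integrable (fun ω => exp (l * X ω)) P
  mgf_le : ∀ l, |l| * c < 1 → mgf X P l ≤ exp (l ^ 2 * v / (2 * (1 - |l| * c)))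

section SubGamma

variable {Ω ι : Type*} [MeasurableSpace Ω] {P : Measure Ω} {X : Ω → ℝ} {v c ε : ℝ}

namespace HasSubgammaMGF

lemma const_mul (h : HasSubgammaMGF X v c P) (r : ℝ) :
    HasSubgammaMGF (fun ω => r * X ω) (r ^ 2 * v) (|r| * c) P := by
  have hscale (l : ℝ) : |l| * (|r| * c) = |l * r| * c := by rw [abs_mul, mul_assoc]
  refine ⟨fun l hl => ?_, fun l hl => ?_⟩
  · simpa only [mul_assoc] using h.integrable_exp_mul (l * r) (by rwa [← hscale])
  · rw [mgf_const_mul, mul_comm r l, hscale, ← mul_assoc, ← mul_pow]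
    exact h.mgf_le (l * r) (by rwa [← hscale])

lemma neg (h : HasSubgammaMGF X v c P) : HasSubgammaMGF (fun ω => -X ω) v c P := by
  simpa using h.const_mul (-1)

lemma sum_of_iIndepFun {X : ι → Ω → ℝ} {v : ι → ℝ} (hindep : iIndepFun X P)
    (hX : ∀ i, Measurable (X i)) {s : Finset ι} (h : ∀ i ∈ s, HasSubgammaMGF (X i) (v i) c P) :
    HasSubgammaMGF (fun ω => ∑ i ∈ s, X i ω) (∑ i ∈ s, v i) c P := by
  have := hindep.isProbabilityMeasure
  rw [← Finset.sum_fn]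
  refine ⟨fun l hl => hindep.integrable_exp_mul_sum hX fun i hi => (h i hi).integrable_exp_mul l hl,
    fun l hl => ?_⟩
  rw [hindep.mgf_sum hX, Finset.mul_sum, Finset.sum_div, exp_sum]
  exact Finset.prod_le_prod (fun i _ => mgf_nonneg) fun i hi => (h i hi).mgf_le l hl

lemma measureReal_ge_le [IsFiniteMeasure P] (h : HasSubgammaMGF X v c P) (hv : 0 < v)
    (hc : 0 ≤ c) (hε : 0 ≤ ε) :
    P.real {ω | ε ≤ X ω} ≤ exp (-ε ^ 2 / (2 * (v + c * ε))) := by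
  -- equals the minimiser `ε / v` of the exponent when `c = 0`, and keeps `l * c < 1` in general
  let l := ε / (v + c * ε)
  have hl : |l| = l := abs_of_nonneg (by positivity)
  have hlc : 1 - l * c = v / (v + c * ε) := by simp only [l]; field_simp; ring
  have hl1 : |l| * c < 1 := by
    rw [hl, ← sub_pos, hlc]; positivity
  calc P.real {ω | ε ≤ X ω} ≤ exp (-l * ε) * mgf X P l :=
        measure_ge_le_exp_mul_mgf ε (by positivity) (h.integrable_exp_mul l hl1)
    _ ≤ exp (-l * ε) * exp (l ^ 2 * v / (2 * (1 - |l| * c))) := by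
        gcongr; exact h.mgf_le l hl1
    _ = exp (-ε ^ 2 / (2 * (v + c * ε))) := by
        rw [← exp_add, hl, hlc]
        simp only [l]
        congr 1
        field_simp
        ring

lemma measureReal_abs_ge_le [IsFiniteMeasure P] (h : HasSubgammaMGF X v c P) (hv : 0 < v)
    (hc : 0 ≤ c) (hε : 0 ≤ ε) :
    P.real {ω | ε ≤ |X ω|} ≤ 2 * exp (-ε ^ 2 / (2 * (v + c * ε))) := by
  have hunion : {ω | ε ≤ |X ω|} = {ω | ε ≤ X ω} ∪ {ω | ε ≤ -X ω} := by
    ext ω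
    simp only [Set.mem_union, Set.mem_ofPred_eq, le_abs]
  rw [hunion, two_mul]
  exact (measureReal_union_le _ _).trans
    (add_le_add (h.measureReal_ge_le hv hc hε) (h.neg.measureReal_ge_le hv hc hε))

end HasSubgammaMGF

lemma measure_abs_average_sub_integral_ge_le [Fintype ι] {Z : ι → Ω → ℝ} {t : ℝ}
    (hindep : iIndepFun Z P) (hZ : ∀ k, Measurable (Z k)) (hint : ∀ k, Integrable (Z k) P)
    (h : ∀ k, HasSubgammaMGF (fun ω => Z k ω - ∫ ω', Z k ω' ∂P) v c P) (hv : 0 < v) (hc : 0 ≤ c)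
    (ht : 0 ≤ t) :
    P {ω | t ≤ |(Fintype.card ι : ℝ)⁻¹ * ∑ k, Z k ω -
        ∫ ω', (Fintype.card ι : ℝ)⁻¹ * ∑ k, Z k ω' ∂P|} ≤
      ENNReal.ofReal (2 * exp (-(Fintype.card ι * t ^ 2) / (2 * (v + c * t)))) := by
  have := hindep.isProbabilityMeasure
  rcases isEmpty_or_nonempty ι
  · exact prob_le_one.trans (by simp)
  let N : ℝ := Fintype.card ι
  have hN : 0 < N := by simp only [N]; positivity
  have hsum : HasSubgammaMGF (fun ω => ∑ k, (Z k ω - ∫ ω', Z k ω' ∂P)) (N * v) c P := by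
    simpa [N] using HasSubgammaMGF.sum_of_iIndepFun (s := Finset.univ)
      (hindep.comp (fun k x => x - ∫ ω', Z k ω' ∂P) fun k => by fun_prop)
      (fun k => (hZ k).sub_const _) fun k _ => h k
  have hevent (ω : Ω) : N⁻¹ * ∑ k, Z k ω - ∫ ω', N⁻¹ * ∑ k, Z k ω' ∂P =
      N⁻¹ * ∑ k, (Z k ω - ∫ ω', Z k ω' ∂P) := by
    rw [integral_const_mul, integral_finsetSum _ fun k _ => hint k, Finset.sum_sub_distrib, mul_sub]
  have hset : {ω | t ≤ |N⁻¹ * ∑ k, Z k ω - ∫ ω', N⁻¹ * ∑ k, Z k ω' ∂P|} =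
      {ω | N * t ≤ |∑ k, (Z k ω - ∫ ω', Z k ω' ∂P)|} := by
    ext ω
    rw [Set.mem_ofPred_eq, Set.mem_ofPred_eq, hevent, abs_mul, abs_of_pos (inv_pos.2 hN),
      le_inv_mul_iff₀ hN]
  rw [hset, ← ofReal_measureReal]
  refine ENNReal.ofReal_le_ofReal
    ((hsum.measureReal_abs_ge_le (by positivity) hc (by positivity)).trans_eq ?_)
  simp only [N]
  congr 2
  field_simp

end SubGamma

section SubGaussianDomination

variable {Ω : Type*} [MeasurableSpace Ω] {P : Measure Ω} {Y Z : Ω → ℝ} {c : ℝ≥0}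

lemma hasSubgaussianMGF_const_mul (hY : HasSubgaussianMGF Y c P) (r : ℝ) :
    HasSubgaussianMGF (fun ω => r * Y ω) (‖r‖₊ ^ 2 * c) P := by
  have hsq : (⟨r ^ 2, sq_nonneg r⟩ : ℝ≥0) = ‖r‖₊ ^ 2 := NNReal.eq (sq_abs r).symm
  exact hsq ▸ hY.const_mul r

lemma integrable_of_abs_le_hasSubgaussianMGF (hY : HasSubgaussianMGF Y c P)
    (hZ : AEMeasurable Z P) (hZY : ∀ ω, |Z ω| ≤ |Y ω|) : Integrable Z P :=
  hY.integrable.mono hZ.aestronglyMeasurable (.of_forall hZY)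

lemma integrable_cosh_mul_of_hasSubgaussianMGF (hY : HasSubgaussianMGF Y c P) (s : ℝ) :
    Integrable (fun ω => cosh (s * Y ω)) P := by
  simp only [cosh_eq, ← neg_mul]
  exact ((hY.integrable_exp_mul s).add (hY.integrable_exp_mul (-s))).div_const 2

lemma integral_cosh_mul_le_of_hasSubgaussianMGF (hY : HasSubgaussianMGF Y c P) (s : ℝ) :
    ∫ ω, cosh (s * Y ω) ∂P ≤ exp (c * s ^ 2 / 2) := by
  simp only [cosh_eq, ← neg_mul]
  rw [integral_div, integral_add (hY.integrable_exp_mul s) (hY.integrable_exp_mul (-s))]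
  have hpos := hY.mgf_le s
  have hneg := hY.mgf_le (-s)
  rw [neg_sq] at hneg
  simp only [mgf] at hpos hneg
  linarith

lemma integrable_exp_mul_of_abs_le_hasSubgaussianMGF (hY : HasSubgaussianMGF Y c P)
    (hZ : AEMeasurable Z P) (hZY : ∀ ω, |Z ω| ≤ |Y ω|) (l : ℝ) :
    Integrable (fun ω => exp (l * Z ω)) P := by
  refine ((integrable_cosh_mul_of_hasSubgaussianMGF hY l).const_mul 2).mono'
    (by fun_prop) (.of_forall fun ω => ?_)
  have hcosh : cosh (l * Z ω) ≤ cosh (l * Y ω) := cosh_le_cosh.2 (by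
    rw [abs_mul, abs_mul]
    exact mul_le_mul_of_nonneg_left (hZY ω) (abs_nonneg l))
  rw [norm_of_nonneg (exp_nonneg _)]
  linarith [cosh_eq (l * Z ω), exp_pos (-(l * Z ω))]

lemma integrable_cosh_remainder [IsFiniteMeasure P] (hY : HasSubgaussianMGF Y c P) :
    Integrable (fun ω => (cosh (2 * Y ω) + 4 * cosh (Y ω) - 5) / 20) P := by
  have hcosh := integrable_cosh_mul_of_hasSubgaussianMGF hY 1
  simp only [one_mul] at hcosh
  exact (((integrable_cosh_mul_of_hasSubgaussianMGF hY 2).add (hcosh.const_mul 4)).sub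
    (integrable_const 5)).div_const 20

lemma integral_cosh_remainder_le_half [IsProbabilityMeasure P] (hY : HasSubgaussianMGF Y 1 P) :
    ∫ ω, (cosh (2 * Y ω) + 4 * cosh (Y ω) - 5) / 20 ∂P ≤ 1 / 2 := by
  have htwo := integrable_cosh_mul_of_hasSubgaussianMGF hY 2
  have hone : Integrable (fun ω => cosh (Y ω)) P := by
    simpa only [one_mul] using integrable_cosh_mul_of_hasSubgaussianMGF hY 1
  have hsum : Integrable (fun ω => cosh (2 * Y ω) + 4 * cosh (Y ω)) P :=
    htwo.add (hone.const_mul 4)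
  have hEtwo : ∫ ω, cosh (2 * Y ω) ∂P ≤ exp 2 :=
    (integral_cosh_mul_le_of_hasSubgaussianMGF hY 2).trans_eq (by norm_num)
  have hEone : ∫ ω, cosh (Y ω) ∂P ≤ exp (1 / 2) := by
    simpa using integral_cosh_mul_le_of_hasSubgaussianMGF hY 1
  rw [integral_div, integral_sub hsum (integrable_const 5),
    integral_add htwo (hone.const_mul 4), integral_const_mul, integral_const, probReal_univ,
    one_smul]
  linarith [exp_two_add_four_mul_exp_half_le]

lemma mgf_le_of_abs_le_hasSubgaussianMGF_one [IsProbabilityMeasure P]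
    (hY : HasSubgaussianMGF Y 1 P) (hZ : AEMeasurable Z P) (hZY : ∀ ω, |Z ω| ≤ |Y ω|) {l : ℝ}
    (hl : |l| < 1) :
    mgf Z P l ≤ 1 + l * ∫ ω, Z ω ∂P + l ^ 2 / (2 * (1 - |l|)) := by
  have hlinear := (integrable_of_abs_le_hasSubgaussianMGF hY hZ hZY).const_mul l
  have hcosh := integrable_cosh_mul_of_hasSubgaussianMGF hY l
  have hmain : Integrable (fun ω => l * Z ω + cosh (l * Y ω)) P := hlinear.add hcosh
  have hremainder := (integrable_cosh_remainder hY).const_mul (|l| ^ 3)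
  have hEcosh : ∫ ω, cosh (l * Y ω) ∂P ≤ exp (|l| ^ 2 / 2) := by
    simpa using integral_cosh_mul_le_of_hasSubgaussianMGF hY l
  calc mgf Z P l
      ≤ ∫ ω, (l * Z ω + cosh (l * Y ω) +
          |l| ^ 3 * ((cosh (2 * Y ω) + 4 * cosh (Y ω) - 5) / 20)) ∂P :=
        integral_mono (integrable_exp_mul_of_abs_le_hasSubgaussianMGF hY hZ hZY l)
          (hmain.add hremainder) fun ω => exp_mul_le_of_abs_le hl.le (hZY ω)
    _ = l * ∫ ω, Z ω ∂P + ∫ ω, cosh (l * Y ω) ∂P +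
          |l| ^ 3 * ∫ ω, (cosh (2 * Y ω) + 4 * cosh (Y ω) - 5) / 20 ∂P := by
        rw [integral_add hmain hremainder, integral_add hlinear hcosh, integral_const_mul,
          integral_const_mul]
    _ ≤ l * ∫ ω, Z ω ∂P + exp (|l| ^ 2 / 2) + |l| ^ 3 * (1 / 2) := by
        gcongr
        exact integral_cosh_remainder_le_half hY
    _ ≤ 1 + l * ∫ ω, Z ω ∂P + l ^ 2 / (2 * (1 - |l|)) := by
        rw [← sq_abs l]
        linarith [exp_half_sq_add_half_cube_le (abs_nonneg l) hl]

lemma hasSubgammaMGF_sub_integral_of_abs_le_one [IsProbabilityMeasure P]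
    (hY : HasSubgaussianMGF Y 1 P) (hZ : AEMeasurable Z P) (hZY : ∀ ω, |Z ω| ≤ |Y ω|) :
    HasSubgammaMGF (fun ω => Z ω - ∫ ω', Z ω' ∂P) 1 1 P := by
  set m := ∫ ω', Z ω' ∂P
  refine ⟨fun l _ => ?_, fun l hl => ?_⟩
  · simp only [mul_sub, exp_sub]
    exact (integrable_exp_mul_of_abs_le_hasSubgaussianMGF hY hZ hZY l).div_const _
  rw [mul_one] at hl ⊢
  calc mgf (fun ω => Z ω - m) P l = mgf Z P l * exp (-(l * m)) := by
        simp only [sub_eq_add_neg, mgf_add_const, mul_neg]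
    _ ≤ exp (l * m + l ^ 2 / (2 * (1 - |l|))) * exp (-(l * m)) := by
        gcongr
        refine (mgf_le_of_abs_le_hasSubgaussianMGF_one hY hZ hZY hl).trans ?_
        linarith [add_one_le_exp (l * m + l ^ 2 / (2 * (1 - |l|)))]
    _ = exp (l ^ 2 / (2 * (1 - |l| * 1))) := by rw [← exp_add, mul_one]; ring_nf

lemma hasSubgammaMGF_sub_integral_of_abs_le [IsProbabilityMeasure P] (hc : c ≠ 0)
    (hY : HasSubgaussianMGF Y c P) (hZ : AEMeasurable Z P) (hZY : ∀ ω, |Z ω| ≤ |Y ω|) :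
    HasSubgammaMGF (fun ω => Z ω - ∫ ω', Z ω' ∂P) c √c P := by
  have hσ : 0 < √(c : ℝ) := by positivity
  have hσsq : √(c : ℝ) ^ 2 = c := sq_sqrt c.2
  have hY1 : HasSubgaussianMGF (fun ω => (√(c : ℝ))⁻¹ * Y ω) 1 P := by
    convert hasSubgaussianMGF_const_mul hY (√(c : ℝ))⁻¹ using 1
    ext
    simp [hσsq, hc]
  have h := (hasSubgammaMGF_sub_integral_of_abs_le_one hY1 (hZ.const_mul (√(c : ℝ))⁻¹) fun ω => by
    rw [abs_mul, abs_mul]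
    exact mul_le_mul_of_nonneg_left (hZY ω) (abs_nonneg _)).const_mul √(c : ℝ)
  simpa only [integral_const_mul, mul_sub, mul_inv_cancel_left₀ hσ.ne', mul_one, hσsq,
    abs_of_pos hσ] using h

end SubGaussianDomination

section ProductMeasures

variable {ι κ α : Type*} [Fintype ι] [Fintype κ] [MeasurableSpace α] {ν : Measure α}
  [IsProbabilityMeasure ν]

lemma measurePreserving_transpose :
    MeasurePreserving (fun (X : ι → κ → α) k i => X i k)
      (Measure.pi fun _ => Measure.pi fun _ => ν) (Measure.pi fun _ => Measure.pi fun _ => ν) := by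
  simp only [← Measure.infinitePi_eq_pi]
  have huncurry : MeasurePreserving (MeasurableEquiv.curry ι κ α).symm
      (Measure.infinitePi fun _ => Measure.infinitePi fun _ => ν)
      (Measure.infinitePi fun _ => ν) :=
    ⟨by fun_prop, Measure.infinitePi_map_curry_symm fun _ _ => ν⟩
  have hswap : MeasurePreserving (fun (X : ι × κ → α) (q : κ × ι) => X q.swap)
      (Measure.infinitePi fun _ => ν) (Measure.infinitePi fun _ => ν) :=
    ⟨by fun_prop, Measure.map_infinitePi_infinitePi_of_inj Prod.swap_injective⟩
  have hcurry : MeasurePreserving (MeasurableEquiv.curry κ ι α)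
      (Measure.infinitePi fun _ => ν)
      (Measure.infinitePi fun _ => Measure.infinitePi fun _ => ν) :=
    ⟨by fun_prop, Measure.infinitePi_map_curry fun _ _ => ν⟩
  exact hcurry.comp (hswap.comp huncurry)

lemma measurePreserving_column (k : κ) :
    MeasurePreserving (fun (X : ι → κ → α) i => X i k)
      (Measure.pi fun _ => Measure.pi fun _ => ν) (Measure.pi fun _ => ν) :=
  (measurePreserving_eval (fun _ : κ => Measure.pi fun _ : ι => ν) k).comp
    measurePreserving_transpose

lemma iIndepFun_column :
    iIndepFun (fun (k : κ) (X : ι → κ → α) i => X i k)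
      (Measure.pi fun _ => Measure.pi fun _ => ν) := by
  rw [iIndepFun_iff_map_fun_eq_pi_map fun k => (measurePreserving_column k).aemeasurable,
    measurePreserving_transpose.map_eq]
  simp only [(measurePreserving_column _).map_eq]

lemma hasSubgaussianMGF_sum_mul {ν : Measure ℝ} [IsProbabilityMeasure ν] {c : ℝ≥0}
    (hν : HasSubgaussianMGF id c ν) (v : ι → ℝ) :
    HasSubgaussianMGF (fun x : ι → ℝ => ∑ i, v i * x i) (∑ i, ‖v i‖₊ ^ 2 * c)
      (Measure.pi fun _ => ν) := by
  refine HasSubgaussianMGF.sum_of_iIndepFun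
    (iIndepFun_pi (X := fun i x => v i * x) (by fun_prop)) fun i _ => ?_
  have hcoord : HasSubgaussianMGF (fun x : ι → ℝ => x i) c (Measure.pi fun _ => ν) :=
    HasSubgaussianMGF.of_map (X := id) (measurable_pi_apply i).aemeasurable
      (by rwa [(measurePreserving_eval (fun _ => ν) i).map_eq])
  exact hasSubgaussianMGF_const_mul hcoord (v i)

end ProductMeasures

section BernoulliGaussian

variable {θ : ℝ}

lemma isProbabilityMeasure_bg (hθ : θ ∈ Set.Icc (0 : ℝ) 1) : IsProbabilityMeasure (bg θ) := by
  refine ⟨?_⟩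
  have hsum : θ.toNNReal + (1 - θ).toNNReal = 1 := by
    rw [← toNNReal_add hθ.1 (sub_nonneg.2 hθ.2)]; simp
  simp only [bg, Measure.add_apply, Measure.smul_apply, measure_univ, ENNReal.smul_def,
    smul_eq_mul, mul_one]
  exact_mod_cast hsum

lemma hasSubgaussianMGF_bg (hθ : θ ∈ Set.Icc (0 : ℝ) 1) : HasSubgaussianMGF id 1 (bg θ) := by
  have hgauss (s : ℝ) : Integrable (fun x => exp (s * id x)) (θ.toNNReal • gaussianReal 0 1) :=
    (integrable_exp_mul_gaussianReal s).smul_measure_nnreal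
  have hdirac (s : ℝ) :
      Integrable (fun x => exp (s * id x)) ((1 - θ).toNNReal • Measure.dirac (0 : ℝ)) :=
    (integrable_dirac (by simp)).smul_measure_nnreal
  refine ⟨fun s => (hgauss s).add_measure (hdirac s), fun s => ?_⟩
  have hval : ∫ x, exp (s * id x) ∂gaussianReal 0 1 = exp (s ^ 2 / 2) := by
    simpa [mgf] using congrFun (mgf_id_gaussianReal (μ := 0) (v := 1)) s
  rw [mgf, bg, integral_add_measure (hgauss s) (hdirac s), integral_smul_nnreal_measure,
    integral_smul_nnreal_measure, hval, integral_dirac]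
  simp only [NNReal.smul_def, smul_eq_mul, id, mul_zero, exp_zero, mul_one, NNReal.coe_one, one_mul,
    coe_toNNReal _ hθ.1, coe_toNNReal _ (sub_nonneg.2 hθ.2)]
  nlinarith [one_le_exp (x := s ^ 2 / 2) (by positivity), hθ.2]

end BernoulliGaussian

section RadialDerivative

variable {n p : ℕ} {μ : ℝ} {w : EuclideanSpace ℝ (Fin (n - 1))}

/-- The Fréchet derivative at `w` of the `i`-th coordinate of the reparametrization `qmap n`. -/
def qmapFDeriv (n : ℕ) (w : EuclideanSpace ℝ (Fin (n - 1))) (i : Fin n) :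
    EuclideanSpace ℝ (Fin (n - 1)) →L[ℝ] ℝ :=
  if h : (i : ℕ) < n - 1 then EuclideanSpace.proj ⟨i, h⟩
  else -(√(1 - ‖w‖ ^ 2))⁻¹ • innerSL ℝ w

/-- The derivative of `qmap n` at `w` in the radial direction `w / ‖w‖`. -/
def qmapRadialDeriv (n : ℕ) (w : EuclideanSpace ℝ (Fin (n - 1))) (i : Fin n) : ℝ :=
  qmapFDeriv n w i w / ‖w‖

/-- The radial derivative at `w` of `w ↦ h_μ(q(w)ᵀ x)`, the contribution of one data column `x`
to the radial derivative of the objective `gfun`. -/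
def hmuRadialDeriv (n : ℕ) (μ : ℝ) (w : EuclideanSpace ℝ (Fin (n - 1))) (x : Fin n → ℝ) : ℝ :=
  tanh ((∑ i, qmap n w i * x i) / μ) * ∑ i, qmapRadialDeriv n w i * x i

lemma one_sub_norm_sq_pos (hw : ‖w‖ < 1) : 0 < 1 - ‖w‖ ^ 2 :=
  sub_pos.2 (pow_lt_one₀ (norm_nonneg w) hw two_ne_zero)

lemma hasFDerivAt_qmap (hw : ‖w‖ < 1) (i : Fin n) :
    HasFDerivAt (fun w => qmap n w i) (qmapFDeriv n w i) w := by
  unfold qmap qmapFDeriv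
  split_ifs with h
  · exact (EuclideanSpace.proj (𝕜 := ℝ) _).hasFDerivAt
  · refine (((hasStrictFDerivAt_norm_sq w).hasFDerivAt.const_sub 1).sqrt
      (one_sub_norm_sq_pos hw).ne').congr_fderiv ?_
    ext u
    simp only [_root_.neg_apply, _root_.smul_apply, coe_innerSL_apply, nsmul_eq_mul, Nat.cast_ofNat,
      smul_eq_mul]
    ring

lemma sum_qmapRadialDeriv_sq (hw : ‖w‖ < 1) (hw0 : w ≠ 0) :
    ∑ i, qmapRadialDeriv n w i ^ 2 = (1 - ‖w‖ ^ 2)⁻¹ := by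
  obtain _ | m := n
  · exact absurd (Subsingleton.elim (α := EuclideanSpace ℝ (Fin 0)) w 0) hw0
  have hnorm : ‖w‖ ≠ 0 := norm_ne_zero_iff.2 hw0
  have hpos := one_sub_norm_sq_pos hw
  have hinit (i : Fin m) : qmapRadialDeriv (m + 1) w i.castSucc = w i / ‖w‖ := by
    simp [qmapRadialDeriv, qmapFDeriv]
  have hlast : qmapRadialDeriv (m + 1) w (Fin.last m) = -(√(1 - ‖w‖ ^ 2))⁻¹ * ‖w‖ := by
    simp only [qmapRadialDeriv, qmapFDeriv, Fin.val_last, add_tsub_cancel_right, lt_self_iff_false,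
      ↓reduceDIte, _root_.smul_apply, coe_innerSL_apply, real_inner_self_eq_norm_sq, smul_eq_mul]
    field_simp
  have hsum : ∑ i : Fin m, w i ^ 2 = ‖w‖ ^ 2 := (EuclideanSpace.real_norm_sq_eq w).symm
  rw [Fin.sum_univ_castSucc, hlast]
  simp only [hinit, div_pow, ← Finset.sum_div]
  rw [hsum, mul_pow, neg_sq, inv_pow, sq_sqrt hpos.le]
  field_simp
  ring

lemma hasDerivAt_hmu (hμ : μ ≠ 0) (z : ℝ) : HasDerivAt (hmu μ) (tanh (z / μ)) z := by
  refine ((((hasDerivAt_id z).div_const μ).cosh).log (cosh_pos _).ne').const_mul μ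
    |>.congr_deriv ?_
  rw [tanh_eq_sinh_div_cosh]
  simp only [id]
  field_simp

lemma hasFDerivAt_gfun (hμ : μ ≠ 0) (Y : Matrix (Fin n) (Fin p) ℝ) (hw : ‖w‖ < 1) :
    HasFDerivAt (gfun n p μ Y)
      ((p : ℝ)⁻¹ • ∑ k, tanh ((∑ i, qmap n w i * Y i k) / μ) • ∑ i, Y i k • qmapFDeriv n w i) w :=
  .const_mul (.fun_sum fun k _ => (hasDerivAt_hmu hμ _).comp_hasFDerivAt w
    (.fun_sum fun i _ => (hasFDerivAt_qmap hw i).mul_const (Y i k))) _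

lemma inner_gradg_div_norm (hμ : μ ≠ 0) (Y : Matrix (Fin n) (Fin p) ℝ) (hw : ‖w‖ < 1) :
    ⟪w, gradg n p μ Y w⟫ / ‖w‖ = (p : ℝ)⁻¹ * ∑ k, hmuRadialDeriv n μ w fun i => Y i k := by
  rw [real_inner_comm, gradg, gradient, InnerProductSpace.toDual_symm_apply,
    (hasFDerivAt_gfun hμ Y hw).fderiv]
  simp [hmuRadialDeriv, qmapRadialDeriv, mul_div_assoc, Finset.sum_div, mul_comm]

lemma measurable_hmuRadialDeriv : Measurable (hmuRadialDeriv n μ w) := by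
  unfold hmuRadialDeriv
  simp only [tanh_eq_sinh_div_cosh]
  fun_prop

lemma abs_hmuRadialDeriv_le (x : Fin n → ℝ) :
    |hmuRadialDeriv n μ w x| ≤ |∑ i, qmapRadialDeriv n w i * x i| := by
  rw [hmuRadialDeriv, abs_mul]
  exact mul_le_of_le_one_left (abs_nonneg _) (abs_tanh_lt_one _).le

lemma hasSubgaussianMGF_sum_qmapRadialDeriv_mul {ν : Measure ℝ} [IsProbabilityMeasure ν]
    (hν : HasSubgaussianMGF id 1 ν) (hw : ‖w‖ < 1) (hw0 : w ≠ 0) :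
    HasSubgaussianMGF (fun x => ∑ i, qmapRadialDeriv n w i * x i) (1 - ‖w‖ ^ 2)⁻¹.toNNReal
      (Measure.pi fun _ => ν) := by
  convert hasSubgaussianMGF_sum_mul hν (qmapRadialDeriv n w) using 1
  ext
  rw [← sum_qmapRadialDeriv_sq hw hw0, coe_toNNReal _ (by positivity)]
  simp

end RadialDerivative

lemma one_lt_four_mul_one_sub_norm_sq {n : ℕ} {w : EuclideanSpace ℝ (Fin (n - 1))}
    (hw : w ∈ GammaSet n) : 1 < 4 * n * (1 - ‖w‖ ^ 2) := by
  have hsq : ‖w‖ ^ 2 < (4 * n - 1) / (4 * n) := (lt_sqrt (norm_nonneg w)).1 hw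
  rcases n.eq_zero_or_pos with rfl | hn
  · exact absurd hsq (by simp)
  rw [lt_div_iff₀ (by positivity)] at hsq
  linarith

lemma norm_lt_one_of_mem_GammaSet {n : ℕ} {w : EuclideanSpace ℝ (Fin (n - 1))}
    (hw : w ∈ GammaSet n) : ‖w‖ < 1 := by
  have hpos : 0 < 1 - ‖w‖ ^ 2 :=
    pos_of_mul_pos_right (one_pos.trans (one_lt_four_mul_one_sub_norm_sq hw)) (by positivity)
  nlinarith [norm_nonneg w]

lemma bernstein_bound_le_of_mem_GammaSet {n : ℕ} (p : ℕ) {w : EuclideanSpace ℝ (Fin (n - 1))}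
    (hw : w ∈ GammaSet n) {t : ℝ} (ht : 0 ≤ t) :
    2 * exp (-(p * t ^ 2) / (2 * ((1 - ‖w‖ ^ 2)⁻¹ + √(1 - ‖w‖ ^ 2)⁻¹ * t))) ≤
      2 * exp (-(p * t ^ 2) / (8 * n + 4 * √n * t)) := by
  have hpos := one_sub_norm_sq_pos (norm_lt_one_of_mem_GammaSet hw)
  have hinv : (1 - ‖w‖ ^ 2)⁻¹ ≤ (4 * n : ℝ) :=
    (inv_le_iff_one_le_mul₀ hpos).2 (one_lt_four_mul_one_sub_norm_sq hw).le
  have hsqrt : √(1 - ‖w‖ ^ 2)⁻¹ ≤ 2 * √n :=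
    (sqrt_le_sqrt hinv).trans_eq (by rw [sqrt_mul zero_le_four]; norm_num)
  rw [neg_div, neg_div]
  gcongr
  nlinarith

theorem statement7_general (n p : ℕ) {ν : Measure ℝ} [IsProbabilityMeasure ν]
    (hν : HasSubgaussianMGF id 1 ν) {μ : ℝ} (hμ : μ ≠ 0) {w : EuclideanSpace ℝ (Fin (n - 1))}
    (hw : ‖w‖ < 1) (hw0 : w ≠ 0) {t : ℝ} (ht : 0 ≤ t) :
    (Measure.pi fun _ => Measure.pi fun _ => ν)
        {X | t ≤ |⟪w, gradg n p μ (Matrix.of X) w⟫ / ‖w‖ -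
                  ∫ X', ⟪w, gradg n p μ (Matrix.of X') w⟫ / ‖w‖
                    ∂Measure.pi fun _ => Measure.pi fun _ => ν|} ≤
      ENNReal.ofReal
        (2 * exp (-(p * t ^ 2) / (2 * ((1 - ‖w‖ ^ 2)⁻¹ + √(1 - ‖w‖ ^ 2)⁻¹ * t)))) := by
  let P : Measure (Fin n → Fin p → ℝ) := Measure.pi fun _ => Measure.pi fun _ => ν
  have hσ : 0 < (1 - ‖w‖ ^ 2)⁻¹ := inv_pos.2 (one_sub_norm_sq_pos hw)
  let Y (k : Fin p) (X : Fin n → Fin p → ℝ) : ℝ := ∑ i, qmapRadialDeriv n w i * X i k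
  let Z (k : Fin p) (X : Fin n → Fin p → ℝ) : ℝ := hmuRadialDeriv n μ w fun i => X i k
  have hY (k : Fin p) : HasSubgaussianMGF (Y k) (1 - ‖w‖ ^ 2)⁻¹.toNNReal P :=
    .of_map (X := fun x => ∑ i, qmapRadialDeriv n w i * x i)
      (measurePreserving_column (ν := ν) k).aemeasurable (by
      rw [(measurePreserving_column k).map_eq]
      exact hasSubgaussianMGF_sum_qmapRadialDeriv_mul hν hw hw0)
  have hZ (k : Fin p) : Measurable (Z k) :=
    measurable_hmuRadialDeriv.comp (measurePreserving_column (ν := ν) k).measurable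
  have hZY (k : Fin p) (X : Fin n → Fin p → ℝ) : |Z k X| ≤ |Y k X| := abs_hmuRadialDeriv_le _
  have hsubgamma (k : Fin p) :
      HasSubgammaMGF (fun X => Z k X - ∫ X', Z k X' ∂P) (1 - ‖w‖ ^ 2)⁻¹ √(1 - ‖w‖ ^ 2)⁻¹ P := by
    simpa only [coe_toNNReal _ hσ.le] using hasSubgammaMGF_sub_integral_of_abs_le
      (toNNReal_pos.2 hσ).ne' (hY k) (hZ k).aemeasurable (hZY k)
  have hindep : iIndepFun Z P :=
    iIndepFun_column.comp (fun _ => hmuRadialDeriv n μ w) fun _ => measurable_hmuRadialDeriv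
  simp only [inner_gradg_div_norm hμ _ hw, Matrix.of_apply]
  simpa only [Fintype.card_fin] using measure_abs_average_sub_integral_ge_le hindep hZ
    (fun k => integrable_of_abs_le_hasSubgaussianMGF (hY k) (hZ k).aemeasurable (hZY k))
    hsubgamma hσ (sqrt_nonneg _) ht

/-- Proposition: pointwise concentration of the directional gradient. -/
theorem statement7 (n p : ℕ) (θ μ : ℝ) (hθ : θ ∈ Set.Ioo (0 : ℝ) 1) (hμ : 0 < μ)
    (w : EuclideanSpace ℝ (Fin (n - 1))) (hw : w ∈ GammaSet n) (hw0 : w ≠ 0)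
    (t : ℝ) (ht : 0 < t) :
    bgMatrix θ n p
        {X | t ≤ |⟪w, gradg n p μ (Matrix.of X) w⟫ / ‖w‖ -
                  ∫ X', ⟪w, gradg n p μ (Matrix.of X') w⟫ / ‖w‖ ∂bgMatrix θ n p|} ≤
      ENNReal.ofReal
        (2 * Real.exp (-((p : ℝ) * t ^ 2) / (8 * n + 4 * Real.sqrt n * t))) := by
  have hθ' := Set.Ioo_subset_Icc_self hθ
  have := isProbabilityMeasure_bg hθ'
  exact (statement7_general n p (hasSubgaussianMGF_bg hθ') hμ.ne' (norm_lt_one_of_mem_GammaSet hw)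
    hw0 ht.le).trans (ENNReal.ofReal_le_ofReal (bernstein_bound_le_of_mem_GammaSet p hw ht.le))

end
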